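/- arXiv:2304.02334 — 3 statements merged into one kernel-verified Lean document; each statement's English description precedes it below -/
import Mathlib

section
/- Let σ ∈ (0, 1] and let f : ℝ → ℝ be a function bounded below such that f(ξ) + ξ²/2 ≥ σ for all ξ ∈ ℝ. Set m = inf_{ξ ∈ ℝ} min(f(ξ), 0), so that m ≤ 0 and m is finite. Then for every σ̃ ∈ (0, σ), the number k = (σ̃ − m)/(2(σ − m)) satisfies 0 < k < 1/2, and f(ξ) ≥ σ̃ − k·ξ² for all ξ ∈ ℝ. -/
open MeasureTheory

/-- The key lower bound in the proof of the existence theorem: if `f + ξ²/2 ≥ σ` with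
`σ ∈ (0,1]` and `m = inf min(f, 0)`, then for every `σ̃ ∈ (0, σ)` the number
`k = (σ̃ - m)/(2(σ - m))` lies in `(0, 1/2)` and `f(ξ) ≥ σ̃ - k ξ²` for all `ξ`. -/
theorem parabola_lower_bound
    (σ : ℝ) (hσ : σ ∈ Set.Ioc (0 : ℝ) 1)
    (f : ℝ → ℝ) (hbdd : BddBelow (Set.range f))
    (hf : ∀ ξ : ℝ, σ ≤ f ξ + ξ ^ 2 / 2)
    (m : ℝ) (hm : m = ⨅ ξ : ℝ, min (f ξ) 0)
    (σ' : ℝ) (hσ' : σ' ∈ Set.Ioo 0 σ)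
    (k : ℝ) (hk : k = (σ' - m) / (2 * (σ - m))) :
    m ≤ 0 ∧ (0 < k ∧ k < 1 / 2) ∧ ∀ ξ : ℝ, σ' - k * ξ ^ 2 ≤ f ξ := by
  obtain ⟨h0, _⟩ := hσ
  obtain ⟨h1, h2⟩ := hσ'
  have hb : BddBelow (Set.range fun ξ : ℝ => min (f ξ) 0) := by
    obtain ⟨c, hc⟩ := hbdd
    refine ⟨min c 0, ?_⟩
    rintro _ ⟨x, rfl⟩
    exact min_le_min_right 0 (hc ⟨x, rfl⟩)
  have hle : ∀ ξ : ℝ, m ≤ min (f ξ) 0 := fun ξ => hm ▸ ciInf_le hb ξ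
  have hm0 : m ≤ 0 := (hle 0).trans (min_le_right _ _)
  have hd : 0 < 2 * (σ - m) := by linarith
  have hk2 : k * (2 * (σ - m)) = σ' - m := by
    rw [hk]; exact div_mul_cancel₀ _ hd.ne'
  have hk0 : 0 < k := by rw [hk]; exact div_pos (by linarith) hd
  have hk1 : k < 1 / 2 := by rw [hk, div_lt_iff₀ hd]; linarith
  refine ⟨hm0, ⟨hk0, hk1⟩, fun ξ => ?_⟩
  have ha : m ≤ f ξ := (hle ξ).trans (min_le_left _ _)
  have e1 := mul_nonneg hk0.le (sub_nonneg.2 (hf ξ))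
  have e2 := mul_nonneg (show 0 ≤ 1 - 2 * k by linarith) (sub_nonneg.2 ha)
  nlinarith
end

section
/- Let W ∈ L¹(ℝ, ℝ) be even and let 0 < c₀. Suppose c ↦ η(c) is a continuously differentiable map from (0, c₀) into H²(ℝ, ℝ) such that for each c ∈ (0, c₀), sup_ℝ η(c) < 1 and η(c) satisfies η'' − 2(W ⋆ η) + c² η + c² η²/(2(1 − η)) + (η')²/(2(1 − η)) + 2(W ⋆ η)·η = 0 on ℝ. Define Ẽ(c) = (c²/8)·∫ η(c)²/(1 − η(c)) + (1/8)·∫ (η(c)')²/(1 − η(c)) + (1/4)·∫ (W ⋆ η(c))·η(c) and P̃(c) = (c/4)·∫ η(c)²/(1 − η(c)). Then Ẽ and P̃ are differentiable on (0, c₀) and Ẽ'(c) = c·P̃'(c) for all c ∈ (0, c₀). -/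
open MeasureTheory Filter

lemma hg_est {f g h n : ℝ → ℝ} {K : ℝ} (hf : Integrable f) (hg : Integrable g)
    (hh : Integrable h) (hn : Integrable n) (hb : ∀ x, |f x - g x - h x| ≤ K * n x) :
    |(∫ x, f x) - (∫ x, g x) - ∫ x, h x| ≤ K * ∫ x, n x := by
  rw [← integral_sub' hf hg, ← integral_sub' (hf.sub hg) hh, ← integral_const_mul]
  exact norm_integral_le_of_norm_le (f := fun x => f x - g x - h x) (hn.const_mul K)
    (Eventually.of_forall hb)

lemma hg_sob {f f' : ℝ → ℝ} (hd : ∀ x, HasDerivAt f (f' x) x)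
    (hf : MemLp f 2) (hf' : MemLp f' 2) (x : ℝ) :
    f x ^ 2 ≤ (∫ y, f y ^ 2) + ∫ y, f' y ^ 2 := by
  have h1 : Integrable (fun y => f y ^ 2) := hf.integrable_sq
  have h2 : Integrable (fun y => f' y ^ 2) := hf'.integrable_sq
  have h3 : Integrable (fun y => 2 * (f y * f' y)) := (hf.integrable_mul hf').const_mul 2
  have hd2 : ∀ y, HasDerivAt (fun y => f y ^ 2) (2 * (f y * f' y)) y := by
    intro y
    have := (hd y).pow 2
    exact this.congr_deriv (by norm_num; ring)
  have ht := tendsto_zero_of_hasDerivAt_of_integrableOn_Iic (a := x) (fun y _ => hd2 y)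
    h3.integrableOn h1.integrableOn
  have hi := integral_Iic_of_hasDerivAt_of_tendsto (a := x) (hd2 x).continuousAt.continuousWithinAt
    (fun y _ => hd2 y) h3.integrableOn ht
  rw [sub_zero] at hi
  rw [← hi, ← integral_add h1 h2]
  calc _ ≤ ∫ y in Set.Iic x, (f y ^ 2 + f' y ^ 2) := by
        apply integral_mono h3.integrableOn (h1.add h2).integrableOn
        intro y
        change 2 * (f y * f' y) ≤ f y ^ 2 + f' y ^ 2
        nlinarith [sq_nonneg (f y - f' y)]
    _ ≤ _ := setIntegral_le_integral (h1.add h2) (Eventually.of_forall fun y => by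
        simp only [Pi.zero_apply]; positivity)

lemma hg_memA {s : ℝ → ℝ} {δ S : ℝ} (hδ : 0 < δ) (cs : Continuous s)
    (hs : MemLp s 2) (hS : ∀ x, |s x| ≤ S)
    (b : ∀ x, δ ≤ 1 - s x) : MemLp (fun x => (2 * s x - s x ^ 2) / (1 - s x) ^ 2) 2 := by
  have hne : ∀ x, 1 - s x ≠ 0 := fun x => by linarith [b x, hδ]
  refine hs.of_le_mul (c := (2 + S) / δ ^ 2) ?_ (Eventually.of_forall fun x => ?_)
  · refine Continuous.aestronglyMeasurable ?_
    exact Continuous.div (by fun_prop) (by fun_prop) (fun x => pow_ne_zero 2 (hne x))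
  · have h1 := b x
    have h2 : δ ^ 2 ≤ (1 - s x) ^ 2 := by gcongr
    have h4 : 0 < 1 - s x := by linarith
    simp only [Real.norm_eq_abs]
    rw [abs_div, abs_of_pos (show 0 < (1 - s x) ^ 2 by positivity), div_mul_eq_mul_div]
    have h3 : |2 * s x - s x ^ 2| ≤ (2 + S) * |s x| := by
      rw [show 2 * s x - s x ^ 2 = (2 - s x) * s x by ring, abs_mul]
      have : |2 - s x| ≤ 2 + S := (abs_sub _ _).trans (by simpa using hS x)
      gcongr
    gcongr
    exact (abs_nonneg _).trans h3

lemma hg_memDiv {s p : ℝ → ℝ} {δ : ℝ} (hδ : 0 < δ) (cs : Continuous s) (cp : Continuous p)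
    (hp : MemLp p 2) (b : ∀ x, δ ≤ 1 - s x) : MemLp (fun x => p x / (1 - s x)) 2 := by
  have hne : ∀ x, 1 - s x ≠ 0 := fun x => by linarith [b x, hδ]
  refine hp.of_le_mul (c := 1 / δ) ?_ (Eventually.of_forall fun x => ?_)
  · refine Continuous.aestronglyMeasurable ?_
    exact Continuous.div (by fun_prop) (by fun_prop) hne
  · have h1 := b x
    simp only [Real.norm_eq_abs]
    rw [abs_div, abs_of_pos (show 0 < (1 - s x) by linarith), div_mul_eq_mul_div, one_mul]
    gcongr

lemma hg_memSq {p : ℝ → ℝ} {R : ℝ} (cp : Continuous p)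
    (hp : MemLp p 2) (hR : ∀ x, |p x| ≤ R) : MemLp (fun x => p x ^ 2) 2 := by
  refine hp.of_le_mul (c := R) (by fun_prop) (Eventually.of_forall fun x => ?_)
  simp only [Real.norm_eq_abs, pow_two, abs_mul]
  gcongr
  exact hR x

lemma hg_intDiv {s n : ℝ → ℝ} {δ : ℝ} (hδ : 0 < δ) (cs : Continuous s) (cn : Continuous n)
    (hn : Integrable n) (b : ∀ x, δ ≤ 1 - s x) : Integrable (fun x => n x / (1 - s x)) := by
  have hne : ∀ x, 1 - s x ≠ 0 := fun x => by linarith [b x, hδ]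
  refine (hn.norm.const_mul (1 / δ)).mono' ?_ (Eventually.of_forall fun x => ?_)
  · refine Continuous.aestronglyMeasurable ?_
    exact Continuous.div (by fun_prop) (by fun_prop) hne
  · have h1 := b x
    simp only [Real.norm_eq_abs]
    rw [abs_div, abs_of_pos (show 0 < (1 - s x) by linarith), div_mul_eq_mul_div, one_mul]
    gcongr

lemma hg_A {s s1 : ℝ → ℝ} {δ S : ℝ} (hδ : 0 < δ) (cs : Continuous s) (cs1 : Continuous s1)
    (hs : MemLp s 2) (hs1 : MemLp s1 2) (hS : ∀ x, |s x| ≤ S)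
    (b : ∀ x, δ ≤ 1 - s x) (b1 : ∀ x, δ ≤ 1 - s1 x) :
    |(∫ x, s1 x ^ 2 / (1 - s1 x)) - (∫ x, s x ^ 2 / (1 - s x))
      - ((∫ x, (2 * s x - s x ^ 2) / (1 - s x) ^ 2 * s1 x)
        - ∫ x, (2 * s x - s x ^ 2) / (1 - s x) ^ 2 * s x)| ≤
      (1 / δ ^ 3) * ∫ x, (s1 x - s x) ^ 2 := by
  have ha := hg_memA hδ cs hs hS b
  have i1 : Integrable (fun x => (2 * s x - s x ^ 2) / (1 - s x) ^ 2 * s1 x) :=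
    ha.integrable_mul hs1
  have i2 : Integrable (fun x => (2 * s x - s x ^ 2) / (1 - s x) ^ 2 * s x) :=
    ha.integrable_mul hs
  rw [← integral_sub i1 i2]
  refine hg_est (hg_intDiv hδ cs1 (by fun_prop) hs1.integrable_sq b1)
    (hg_intDiv hδ cs (by fun_prop) hs.integrable_sq b) (i1.sub i2) (hs1.sub hs).integrable_sq ?_
  intro x
  have h0 := b x
  have h1 := b1 x
  have p0 : 0 < 1 - s x := by linarith
  have p1 : 0 < 1 - s1 x := by linarith
  have e : s1 x ^ 2 / (1 - s1 x) - s x ^ 2 / (1 - s x)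
      - ((2 * s x - s x ^ 2) / (1 - s x) ^ 2 * s1 x - (2 * s x - s x ^ 2) / (1 - s x) ^ 2 * s x)
      = 1 / ((1 - s x) ^ 2 * (1 - s1 x)) * (s1 x - s x) ^ 2 := by
    field_simp
    ring
  rw [e, abs_of_nonneg (by positivity)]
  have : δ ^ 3 ≤ (1 - s x) ^ 2 * (1 - s1 x) := by
    calc δ ^ 3 = δ ^ 2 * δ := by ring
      _ ≤ _ := by gcongr
  gcongr

lemma hg_B {s s1 p p1 : ℝ → ℝ} {δ R : ℝ} (hδ : 0 < δ) (cs : Continuous s) (cs1 : Continuous s1)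
    (cp : Continuous p) (cp1 : Continuous p1)
    (hs : MemLp s 2) (hs1 : MemLp s1 2) (hp : MemLp p 2) (hp1 : MemLp p1 2) (hR : ∀ x, |p x| ≤ R)
    (b : ∀ x, δ ≤ 1 - s x) (b1 : ∀ x, δ ≤ 1 - s1 x) :
    |(∫ x, p1 x ^ 2 / (1 - s1 x)) - (∫ x, p x ^ 2 / (1 - s x))
      - ((2 * (∫ x, p x / (1 - s x) * p1 x) + ∫ x, p x ^ 2 / (1 - s x) / (1 - s x) * s1 x)
        - (2 * (∫ x, p x / (1 - s x) * p x) + ∫ x, p x ^ 2 / (1 - s x) / (1 - s x) * s x))| ≤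
      (2 * (R ^ 2 / δ ^ 2 + 1) / δ) * ((∫ x, (s1 x - s x) ^ 2) + ∫ x, (p1 x - p x) ^ 2) := by
  have hne : ∀ x, 1 - s x ≠ 0 := fun x => by linarith [b x, hδ]
  have ha := hg_memDiv hδ cs cp hp b
  have hb : MemLp (fun x => p x ^ 2 / (1 - s x) / (1 - s x)) 2 := hg_memDiv hδ cs (Continuous.div (by fun_prop) (by fun_prop) hne)
    (hg_memDiv hδ cs (by fun_prop) (hg_memSq cp hp hR) b) b
  have i1 := (ha.integrable_mul hp1).const_mul 2
  have i2 := hb.integrable_mul hs1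
  have i3 := (ha.integrable_mul hp).const_mul 2
  have i4 := hb.integrable_mul hs
  have j1 : Integrable (fun x => (s1 x - s x) ^ 2) := (hs1.sub hs).integrable_sq
  have j2 : Integrable (fun x => (p1 x - p x) ^ 2) := (hp1.sub hp).integrable_sq
  have key := hg_est (K := 2 * (R ^ 2 / δ ^ 2 + 1) / δ)
    (hg_intDiv hδ cs1 (by fun_prop) hp1.integrable_sq b1)
    (hg_intDiv hδ cs (by fun_prop) hp.integrable_sq b) ((i1.add i2).sub (i3.add i4))
    (j1.add j2) ?_
  · rw [integral_sub' (i1.add i2) (i3.add i4), integral_add' i1 i2, integral_add' i3 i4,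
      integral_const_mul, integral_const_mul, integral_add' j1 j2] at key
    exact key
  intro x
  have h0 := b x
  have h1 := b1 x
  have p0 : 0 < 1 - s x := by linarith
  have p1' : 0 < 1 - s1 x := by linarith
  simp only [Pi.sub_apply, Pi.add_apply, Pi.mul_apply]
  have e : p1 x ^ 2 / (1 - s1 x) - p x ^ 2 / (1 - s x)
      - (2 * (p x / (1 - s x) * p1 x) + p x ^ 2 / (1 - s x) / (1 - s x) * s1 x
        - (2 * (p x / (1 - s x) * p x) + p x ^ 2 / (1 - s x) / (1 - s x) * s x))
      = (p x / (1 - s x) * (s1 x - s x) + (p1 x - p x)) ^ 2 / (1 - s1 x) := by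
    field_simp
    ring
  rw [e, abs_of_nonneg (by positivity)]
  have hpr : (p x / (1 - s x)) ^ 2 ≤ R ^ 2 / δ ^ 2 := by
    rw [div_pow]
    have : p x ^ 2 ≤ R ^ 2 := sq_le_sq' (by linarith [abs_le.1 (hR x)]) (abs_le.1 (hR x)).2
    gcongr
  have hR0 : 0 ≤ R ^ 2 / δ ^ 2 := by positivity
  generalize p x / (1 - s x) = a at *
  generalize s1 x - s x = k at *
  generalize p1 x - p x = q at *
  have : (a * k + q) ^ 2 ≤ 2 * (R ^ 2 / δ ^ 2 + 1) * (k ^ 2 + q ^ 2) := by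
    nlinarith [sq_nonneg (a * k - q), mul_le_mul_of_nonneg_right hpr (sq_nonneg k),
      mul_nonneg hR0 (sq_nonneg q), sq_nonneg k]
  rw [div_mul_eq_mul_div]
  gcongr

lemma hg_conv_int {W f g : ℝ → ℝ} (hW : Integrable W) (cf : Continuous f) (cg : Continuous g)
    (hf : MemLp f 2) (hg : MemLp g 2) :
    Integrable (fun z : ℝ × ℝ => W z.2 * f (z.1 - z.2) * g z.1) (volume.prod volume) := by
  have h1 : Integrable (fun z : ℝ × ℝ => |W z.2| * f (z.1 - z.2) ^ 2) (volume.prod volume) :=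
    Integrable.convolution_integrand (ContinuousLinearMap.mul ℝ ℝ) hW.norm hf.integrable_sq
  have h2 : Integrable (fun z : ℝ × ℝ => g z.1 ^ 2 * |W z.2|) (volume.prod volume) :=
    Integrable.mul_prod hg.integrable_sq hW.norm
  refine (h1.add h2).mono' ?_ (Eventually.of_forall fun z => ?_)
  · have hm : AEStronglyMeasurable (fun z : ℝ × ℝ => W z.2) (volume.prod volume) :=
      hW.aestronglyMeasurable.comp_snd
    exact (hm.mul (Continuous.aestronglyMeasurable (by fun_prop))).mul
      (Continuous.aestronglyMeasurable (by fun_prop))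
  · simp only [Real.norm_eq_abs, abs_mul, Pi.add_apply]
    rw [← sq_abs (f _), ← sq_abs (g _)]
    have h := abs_nonneg (W z.2)
    generalize |W z.2| = a at *
    generalize |f (z.1 - z.2)| = u at *
    generalize |g z.1| = v at *
    nlinarith [mul_nonneg h (sq_nonneg (u - v)), mul_nonneg h (sq_nonneg u), mul_nonneg h (sq_nonneg v)]

lemma hg_conv_sym {W f g : ℝ → ℝ} (hW : Integrable W) (he : ∀ x, W (-x) = W x)
    (cf : Continuous f) (cg : Continuous g) (hf : MemLp f 2) (hg : MemLp g 2) :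
    ∫ x, (∫ t, W t * f (x - t)) * g x = ∫ x, (∫ t, W t * g (x - t)) * f x := by
  simp_rw [← integral_mul_const]
  have e1 := integral_integral_swap (f := fun x t => W t * f (x - t) * g x)
    (hg_conv_int hW cf cg hf hg)
  have e2 := integral_integral_swap (f := fun x t => W t * g (x - t) * f x)
    (hg_conv_int hW cg cf hg hf)
  rw [e1, e2, ← integral_neg_eq_self]
  congr 1
  ext t
  rw [← integral_sub_right_eq_self _ t]
  congr 1
  ext x
  rw [he]
  simp only [sub_neg_eq_add, sub_add_cancel]
  ring

lemma hg_conv_bound {W f : ℝ → ℝ} (hW : Integrable W) 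
    (cf : Continuous f) (hf : MemLp f 2) :
    |∫ x, (∫ t, W t * f (x - t)) * f x| ≤ (∫ t, |W t|) * ∫ x, f x ^ 2 := by
  have h1 : Integrable (fun z : ℝ × ℝ => |W z.2| * f (z.1 - z.2) ^ 2) (volume.prod volume) :=
    Integrable.convolution_integrand (ContinuousLinearMap.mul ℝ ℝ) hW.norm hf.integrable_sq
  have h2 : Integrable (fun z : ℝ × ℝ => |W z.2| * f z.1 ^ 2) (volume.prod volume) := by
    have : Integrable (fun z : ℝ × ℝ => f z.1 ^ 2 * |W z.2|) (volume.prod volume) :=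
      Integrable.mul_prod hf.integrable_sq hW.norm
    simpa only [mul_comm] using this
  simp_rw [← integral_mul_const]
  rw [← integral_prod _ (hg_conv_int hW cf cf hf hf)]
  have hb : ∀ z : ℝ × ℝ, ‖W z.2 * f (z.1 - z.2) * f z.1‖ ≤
      (1/2) * ((|W z.2| * f (z.1 - z.2) ^ 2) + |W z.2| * f z.1 ^ 2) := by
    intro z
    simp only [Real.norm_eq_abs, abs_mul]
    rw [← sq_abs (f (z.1 - z.2)), ← sq_abs (f z.1)]
    have h := abs_nonneg (W z.2)
    nlinarith [mul_nonneg h (sq_nonneg (|f (z.1 - z.2)| - |f z.1|))]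
  refine (norm_integral_le_of_norm_le ((h1.add h2).const_mul (1/2))
    (Eventually.of_forall hb)).trans (le_of_eq ?_)
  rw [integral_const_mul, integral_add' h1 h2, integral_prod_symm _ h1, integral_prod_symm _ h2]
  have e1 : ∀ t, ∫ x, |W t| * f (x - t) ^ 2 = |W t| * ∫ x, f x ^ 2 := by
    intro t
    rw [integral_const_mul, integral_sub_right_eq_self (fun x => f x ^ 2) t]
  simp only [e1, integral_const_mul, integral_mul_const]
  ring

lemma hg_conv_integrable {W f g : ℝ → ℝ} (hW : Integrable W) (cf : Continuous f) (cg : Continuous g)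
    (hf : MemLp f 2) (hg : MemLp g 2) :
    Integrable (fun x => (∫ t, W t * f (x - t)) * g x) := by
  have := (hg_conv_int hW cf cg hf hg).integral_prod_left
  simpa only [integral_mul_const] using this

lemma hg_C {W s s1 : ℝ → ℝ} {S : ℝ} (hW : Integrable W) (he : ∀ x, W (-x) = W x)
    (cs : Continuous s) (cs1 : Continuous s1)
    (hs : MemLp s 2) (hs1 : MemLp s1 2) (hS : ∀ x, |s x| ≤ S) (hS1 : ∃ S1, ∀ x, |s1 x| ≤ S1) :
    |(∫ x, (∫ t, W t * s1 (x - t)) * s1 x) - (∫ x, (∫ t, W t * s (x - t)) * s x)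
      - (2 * (∫ x, (∫ t, W t * s (x - t)) * s1 x) - 2 * ∫ x, (∫ t, W t * s (x - t)) * s x)| ≤
      (∫ t, |W t|) * ∫ x, (s1 x - s x) ^ 2 := by
  obtain ⟨S1, hS1⟩ := hS1
  have hk : MemLp (fun x => s1 x - s x) 2 := hs1.sub hs
  refine le_trans (le_of_eq ?_) (hg_conv_bound hW (cs1.sub cs) hk)
  have w1 : ∀ x, Integrable (fun t => W t * s1 (x - t)) := fun x =>
    hW.mul_bdd (c := S1) (Continuous.aestronglyMeasurable (by fun_prop))
      (Eventually.of_forall fun t => hS1 _)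
  have w0 : ∀ x, Integrable (fun t => W t * s (x - t)) := fun x =>
    hW.mul_bdd (c := S) (Continuous.aestronglyMeasurable (by fun_prop))
      (Eventually.of_forall fun t => hS _)
  congr 1
  have e : ∀ x, (∫ t, W t * (s1 (x - t) - s (x - t))) * (s1 x - s x)
      = ((∫ t, W t * s1 (x - t)) * s1 x - (∫ t, W t * s1 (x - t)) * s x)
        - ((∫ t, W t * s (x - t)) * s1 x - (∫ t, W t * s (x - t)) * s x) := by
    intro x
    simp only [mul_sub]
    rw [integral_sub (w1 x) (w0 x)]
    ring
  simp only [e]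
  have i11 := hg_conv_integrable hW cs1 cs1 hs1 hs1
  have i10 := hg_conv_integrable hW cs1 cs hs1 hs
  have i01 := hg_conv_integrable hW cs cs1 hs hs1
  have i00 := hg_conv_integrable hW cs cs hs hs
  have e3 := integral_sub' (i11.sub i10) (i01.sub i00)
  simp only [Pi.sub_apply] at e3
  rw [e3, integral_sub i11 i10, integral_sub i01 i00,
    hg_conv_sym hW he cs1 cs hs1 hs]
  ring

lemma hg_pair {a : ℝ → ℝ} (ha : MemLp a 2) {F : ℝ → Lp ℝ 2 (volume : Measure ℝ)}
    {G : Lp ℝ 2 (volume : Measure ℝ)} {f : ℝ → ℝ → ℝ} {c : ℝ}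
    (hF : ∀ᶠ d in nhds c, (F d : ℝ → ℝ) =ᵐ[volume] f d) (hd : HasDerivAt F G c) :
    HasDerivAt (fun d => ∫ x, a x * f d x) (inner ℝ (ha.toLp a) G) c := by
  have h := (hasDerivAt_const c (ha.toLp a)).inner ℝ hd
  simp only [inner_zero_left, add_zero] at h
  refine h.congr_of_eventuallyEq ?_
  filter_upwards [hF] with d hd
  rw [L2.inner_def]
  refine integral_congr_ae ?_
  filter_upwards [hd, ha.coeFn_toLp] with x h1 h2
  rw [h1, h2]
  simp [mul_comm]

lemma hg_N {F : ℝ → Lp ℝ 2 (volume : Measure ℝ)}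
    {G : Lp ℝ 2 (volume : Measure ℝ)} {f : ℝ → ℝ → ℝ} {c : ℝ}
    (hF : ∀ᶠ d in nhds c, (F d : ℝ → ℝ) =ᵐ[volume] f d) (hd : HasDerivAt F G c) :
    HasDerivAt (fun d => ∫ x, (f d x - f c x) ^ 2) 0 c := by
  have h := (hd.sub_const (F c)).norm_sq
  simp only [sub_self, inner_zero_left, mul_zero] at h
  refine h.congr_of_eventuallyEq ?_
  filter_upwards [hF] with d hd
  rw [← real_inner_self_eq_norm_sq, L2.inner_def]
  refine integral_congr_ae ?_
  filter_upwards [hd, hF.self_of_nhds, Lp.coeFn_sub (F d) (F c)] with x h1 h2 h3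
  rw [h3]
  simp [h1, h2, pow_two]

lemma hg_deriv {f l N : ℝ → ℝ} {c l' K : ℝ} (hl : HasDerivAt l l' c) (hN : HasDerivAt N 0 c)
    (hN0 : N c = 0) (hb : ∀ᶠ d in nhds c, |f d - f c - (l d - l c)| ≤ K * N d) :
    HasDerivAt f l' c := by
  have h1 : HasDerivAt (fun d => f d - l d) 0 c := by
    rw [hasDerivAt_iff_isLittleO] at hN ⊢
    simp only [hN0, sub_zero, smul_zero] at hN ⊢
    refine Asymptotics.IsBigO.trans_isLittleO (Asymptotics.IsBigO.of_bound |K| ?_) hN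
    filter_upwards [hb] with d h
    have hh : f d - l d - (f c - l c) = f d - f c - (l d - l c) := by ring
    rw [hh]
    have : 0 ≤ K * N d := (abs_nonneg _).trans h
    rw [Real.norm_eq_abs, Real.norm_eq_abs]
    exact h.trans ((le_abs_self _).trans_eq (abs_mul _ _))
  refine (h1.add hl).congr_deriv (zero_add _) |>.congr_of_eventuallyEq ?_
  exact Eventually.of_forall fun d => by simp

/-- Hamilton group relation along a `C¹` branch of dark solitons: if `c ↦ η(c)` is a
continuously differentiable map from `(0, c₀)` into `H²(ℝ)` (encoded via the maps
`c ↦ iteratedDeriv j (η c)`, `j = 0, 1, 2`, being `C¹` into `L²(ℝ)`), each `η(c)` has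
supremum `< 1` and solves the hydrodynamic traveling-wave equation, then the energy
`Ẽ` and momentum `P̃` are differentiable and satisfy `Ẽ'(c) = c P̃'(c)` on `(0, c₀)`. -/
theorem hamilton_group_relation
    (W : ℝ → ℝ) (hW_int : Integrable W) (hW_even : ∀ x, W (-x) = W x)
    (c₀ : ℝ) (hc₀ : 0 < c₀)
    (η : ℝ → ℝ → ℝ)
    (hη_smooth : ∀ c ∈ Set.Ioo (0 : ℝ) c₀, ContDiff ℝ (⊤ : ℕ∞) (η c))
    (hη_sup : ∀ c ∈ Set.Ioo (0 : ℝ) c₀, ∃ M : ℝ, M < 1 ∧ ∀ x, η c x ≤ M)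
    (F : Fin 3 → ℝ → MeasureTheory.Lp ℝ 2 (volume : Measure ℝ))
    (hF_C1 : ∀ j : Fin 3, ContDiffOn ℝ 1 (F j) (Set.Ioo (0 : ℝ) c₀))
    (hF_eq : ∀ j : Fin 3, ∀ c ∈ Set.Ioo (0 : ℝ) c₀,
      (F j c : ℝ → ℝ) =ᵐ[volume] iteratedDeriv (j : ℕ) (η c))
    (heq : ∀ c ∈ Set.Ioo (0 : ℝ) c₀, ∀ x : ℝ,
      deriv (deriv (η c)) x - 2 * (∫ t : ℝ, W t * η c (x - t)) + c ^ 2 * η c x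
        + c ^ 2 * (η c x) ^ 2 / (2 * (1 - η c x))
        + (deriv (η c) x) ^ 2 / (2 * (1 - η c x))
        + 2 * (∫ t : ℝ, W t * η c (x - t)) * η c x = 0)
    (E P : ℝ → ℝ)
    (hE : ∀ c : ℝ, E c = c ^ 2 / 8 * (∫ x : ℝ, (η c x) ^ 2 / (1 - η c x))
        + 1 / 8 * (∫ x : ℝ, (deriv (η c) x) ^ 2 / (1 - η c x))
        + 1 / 4 * (∫ x : ℝ, (∫ t : ℝ, W t * η c (x - t)) * η c x))
    (hP : ∀ c : ℝ, P c = c / 4 * ∫ x : ℝ, (η c x) ^ 2 / (1 - η c x)) :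
    ∀ c ∈ Set.Ioo (0 : ℝ) c₀, ∃ p' : ℝ, HasDerivAt P p' c ∧ HasDerivAt E (c * p') c := by
  intro c hc
  have hnhds : Set.Ioo (0 : ℝ) c₀ ∈ nhds c := isOpen_Ioo.mem_nhds hc
  have hev : ∀ᶠ d in nhds c, d ∈ Set.Ioo (0 : ℝ) c₀ := hnhds
  have hFd : ∀ j, ∃ G, HasDerivAt (F j) G c := fun j =>
    ⟨_, (((hF_C1 j).differentiableOn one_ne_zero).differentiableAt hnhds).hasDerivAt⟩
  obtain ⟨G0, hG0⟩ := hFd 0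
  obtain ⟨G1, hG1⟩ := hFd 1
  have hf0 : ∀ d ∈ Set.Ioo (0 : ℝ) c₀, (F 0 d : ℝ → ℝ) =ᵐ[volume] η d := fun d hd => by
    simpa using hF_eq 0 d hd
  have hf1 : ∀ d ∈ Set.Ioo (0 : ℝ) c₀, (F 1 d : ℝ → ℝ) =ᵐ[volume] deriv (η d) := fun d hd => by
    simpa using hF_eq 1 d hd
  have hf2 : ∀ d ∈ Set.Ioo (0 : ℝ) c₀, (F 2 d : ℝ → ℝ) =ᵐ[volume] deriv (deriv (η d)) :=
    fun d hd => by
      have := hF_eq 2 d hd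
      simpa [iteratedDeriv_succ] using this
  have m0 : ∀ d ∈ Set.Ioo (0 : ℝ) c₀, MemLp (η d) 2 := fun d hd =>
    (memLp_congr_ae (hf0 d hd)).1 (Lp.memLp _)
  have m1 : ∀ d ∈ Set.Ioo (0 : ℝ) c₀, MemLp (deriv (η d)) 2 := fun d hd =>
    (memLp_congr_ae (hf1 d hd)).1 (Lp.memLp _)
  have m2 : ∀ d ∈ Set.Ioo (0 : ℝ) c₀, MemLp (deriv (deriv (η d))) 2 := fun d hd =>
    (memLp_congr_ae (hf2 d hd)).1 (Lp.memLp _)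
  have sm1 : ∀ d ∈ Set.Ioo (0 : ℝ) c₀, ContDiff ℝ (⊤ : ℕ∞) (deriv (η d)) := fun d hd =>
    (contDiff_infty_iff_deriv.1 (hη_smooth d hd)).2
  have d0 : ∀ d ∈ Set.Ioo (0 : ℝ) c₀, ∀ x, HasDerivAt (η d) (deriv (η d) x) x := fun d hd x =>
    ((contDiff_infty_iff_deriv.1 (hη_smooth d hd)).1 x).hasDerivAt
  have d1 : ∀ d ∈ Set.Ioo (0 : ℝ) c₀, ∀ x,
      HasDerivAt (deriv (η d)) (deriv (deriv (η d)) x) x := fun d hd x =>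
    ((contDiff_infty_iff_deriv.1 (sm1 d hd)).1 x).hasDerivAt
  have k0 : ∀ d ∈ Set.Ioo (0 : ℝ) c₀, Continuous (η d) := fun d hd => (hη_smooth d hd).continuous
  have k1 : ∀ d ∈ Set.Ioo (0 : ℝ) c₀, Continuous (deriv (η d)) := fun d hd => (sm1 d hd).continuous
  have k2 : ∀ d ∈ Set.Ioo (0 : ℝ) c₀, Continuous (deriv (deriv (η d))) := fun d hd =>
    (contDiff_infty_iff_deriv.1 (sm1 d hd)).2.continuous
  have bd0 : ∀ d ∈ Set.Ioo (0 : ℝ) c₀, ∃ S, ∀ x, |η d x| ≤ S := fun d hd =>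
    ⟨_, fun x => Real.abs_le_sqrt (hg_sob (d0 d hd) (m0 d hd) (m1 d hd) x)⟩
  obtain ⟨S, hS⟩ := bd0 c hc
  obtain ⟨R, hR⟩ : ∃ R, ∀ x, |deriv (η c) x| ≤ R :=
    ⟨_, fun x => Real.abs_le_sqrt (hg_sob (d1 c hc) (m1 c hc) (m2 c hc) x)⟩
  obtain ⟨M, hM1, hM⟩ := hη_sup c hc
  obtain ⟨δ, hδ, hδM⟩ : ∃ δ : ℝ, 0 < δ ∧ 2 * δ = 1 - M := ⟨(1 - M) / 2, by linarith, by ring⟩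
  have ev0 : ∀ᶠ d in nhds c, (F 0 d : ℝ → ℝ) =ᵐ[volume] η d := hev.mono hf0
  have ev1 : ∀ᶠ d in nhds c, (F 1 d : ℝ → ℝ) =ᵐ[volume] deriv (η d) := hev.mono hf1
  have N0 := hg_N ev0 hG0
  have N1 := hg_N (f := fun d => deriv (η d)) ev1 hG1
  have hN : HasDerivAt (fun d => (∫ x, (η d x - η c x) ^ 2)
      + ∫ x, (deriv (η d) x - deriv (η c) x) ^ 2) 0 c := by
    have := N0.add N1
    rw [add_zero] at this
    exact this
  have b : ∀ x, δ ≤ 1 - η c x := fun x => by linarith [hM x]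
  have evb : ∀ᶠ d in nhds c, ∀ x, δ ≤ 1 - η d x := by
    have ht := hN.continuousAt.eventually_lt (g := fun _ => δ ^ 2) continuousAt_const
      (by simpa using pow_pos hδ 2)
    filter_upwards [ht, hev] with d h hd x
    have hs := hg_sob (f := fun x => η d x - η c x) (fun x => (d0 d hd x).sub (d0 c hc x))
      ((m0 d hd).sub (m0 c hc)) ((m1 d hd).sub (m1 c hc)) x
    have := abs_le_of_sq_le_sq' (hs.trans h.le) hδ.le
    linarith [hM x, this.2]
  have hne : ∀ x, 1 - η c x ≠ 0 := fun x => by linarith [b x]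
  -- memberships
  have ha := hg_memA hδ (k0 c hc) (m0 c hc) hS b
  have hφ := hg_memDiv hδ (k0 c hc) (k1 c hc) (m1 c hc) b
  have hφ1 := hg_memDiv hδ (k0 c hc) (k2 c hc) (m2 c hc) b
  have hφ2 : MemLp (fun x => deriv (η c) x ^ 2 / (1 - η c x) / (1 - η c x)) 2 :=
    hg_memDiv hδ (k0 c hc)
      (Continuous.div ((k1 c hc).pow 2) (continuous_const.sub (k0 c hc)) hne)
      (hg_memDiv hδ (k0 c hc) ((k1 c hc).pow 2) (hg_memSq (k1 c hc) (m1 c hc) hR) b) b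
  have hwe : ∀ x, (∫ t : ℝ, W t * η c (x - t)) =
      (1 / 4) * (c ^ 2 * ((2 * η c x - η c x ^ 2) / (1 - η c x) ^ 2)
      + (2 * (deriv (deriv (η c)) x / (1 - η c x))
        + deriv (η c) x ^ 2 / (1 - η c x) / (1 - η c x))) := by
    intro x
    have h := heq c hc x
    have h1 := hne x
    generalize (∫ t : ℝ, W t * η c (x - t)) = w at *
    field_simp at h ⊢
    linear_combination (-1 : ℝ) * h
  have hw : MemLp (fun x => ∫ t : ℝ, W t * η c (x - t)) 2 := by
    rw [funext hwe]
    exact ((ha.const_mul (c ^ 2)).add ((hφ1.const_mul 2).add hφ2)).const_mul (1 / 4)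
  have Da := hg_pair ha ev0 hG0
  have Dw := hg_pair hw ev0 hG0
  generalize inner ℝ (ha.toLp _) G0 = α at Da
  generalize inner ℝ (hw.toLp _) G0 = γ at Dw
  -- A
  have hA : HasDerivAt (fun d => ∫ x, η d x ^ 2 / (1 - η d x)) α c := by
    refine hg_deriv (K := 1 / δ ^ 3) Da N0 (by simp) ?_
    filter_upwards [hev, evb] with d hd hb
    exact hg_A hδ (k0 c hc) (k0 d hd) (m0 c hc) (m0 d hd) hS b hb
  have hC : HasDerivAt (fun d => ∫ x, (∫ t : ℝ, W t * η d (x - t)) * η d x) (2 * γ) c := by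
    refine hg_deriv (K := ∫ t, |W t|) (Dw.const_mul 2) N0 (by simp) ?_
    filter_upwards [hev] with d hd
    exact hg_C hW_int hW_even (k0 c hc) (k0 d hd) (m0 c hc) (m0 d hd) hS (bd0 d hd)
  have hibp : ∀ d ∈ Set.Ioo (0 : ℝ) c₀,
      2 * (∫ x, deriv (η c) x / (1 - η c x) * deriv (η d) x)
        + (∫ x, deriv (η c) x ^ 2 / (1 - η c x) / (1 - η c x) * η d x)
      = c ^ 2 * (∫ x, (2 * η c x - η c x ^ 2) / (1 - η c x) ^ 2 * η d x)
        - 4 * ∫ x, (∫ t : ℝ, W t * η c (x - t)) * η d x := by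
    intro d hd
    have i1 := hφ1.integrable_mul (m0 d hd)
    have i2 := hφ2.integrable_mul (m0 d hd)
    have i3 := ha.integrable_mul (m0 d hd)
    have hφ' : MemLp (fun x => deriv (deriv (η c)) x / (1 - η c x)
        + deriv (η c) x ^ 2 / (1 - η c x) / (1 - η c x)) 2 := hφ1.add hφ2
    have hI := integral_mul_deriv_eq_deriv_mul_of_integrable
      (u := fun x => deriv (η c) x / (1 - η c x)) (v := η d) (v' := deriv (η d))
      (u' := fun x => deriv (deriv (η c)) x / (1 - η c x)
        + deriv (η c) x ^ 2 / (1 - η c x) / (1 - η c x))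
      (fun x _ => by
        have := (d1 c hc x).div ((d0 c hc x).const_sub 1) (hne x)
        refine this.congr_deriv ?_
        have h1 := hne x
        field_simp
        ring)
      (fun x _ => d0 d hd x) (hφ.integrable_mul (m1 d hd)) (hφ'.integrable_mul (m0 d hd))
      (hφ.integrable_mul (m0 d hd))
    rw [hI]
    have e1 : ∀ x, (deriv (deriv (η c)) x / (1 - η c x)
        + deriv (η c) x ^ 2 / (1 - η c x) / (1 - η c x)) * η d x
        = deriv (deriv (η c)) x / (1 - η c x) * η d x
        + deriv (η c) x ^ 2 / (1 - η c x) / (1 - η c x) * η d x := fun x => by ring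
    have e2 : ∀ x, (∫ t : ℝ, W t * η c (x - t)) * η d x =
        (c ^ 2 / 4) * ((2 * η c x - η c x ^ 2) / (1 - η c x) ^ 2 * η d x)
      + ((1 / 2) * (deriv (deriv (η c)) x / (1 - η c x) * η d x)
        + (1 / 4) * (deriv (η c) x ^ 2 / (1 - η c x) / (1 - η c x) * η d x)) := by
      intro x
      rw [hwe x]
      ring
    have s1 := integral_add' i1 i2
    have s2 := integral_add' (i3.const_mul (c ^ 2 / 4))
      ((i1.const_mul (1 / 2)).add (i2.const_mul (1 / 4)))
    rw [integral_add' (i1.const_mul (1 / 2)) (i2.const_mul (1 / 4)), integral_const_mul,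
      integral_const_mul, integral_const_mul] at s2
    simp only [Pi.add_apply, Pi.mul_apply] at s1 s2
    simp only [e1, e2]
    rw [s1, s2]
    ring
  have hB : HasDerivAt (fun d => ∫ x, deriv (η d) x ^ 2 / (1 - η d x))
      (c ^ 2 * α - 4 * γ) c := by
    refine hg_deriv (K := 2 * (R ^ 2 / δ ^ 2 + 1) / δ)
      ((Da.const_mul (c ^ 2)).sub (Dw.const_mul 4)) hN (by simp) ?_
    filter_upwards [hev, evb] with d hd hb
    have := hg_B hδ (k0 c hc) (k0 d hd) (k1 c hc) (k1 d hd) (m0 c hc) (m0 d hd)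
      (m1 c hc) (m1 d hd) hR b hb
    rw [hibp d hd, hibp c hc] at this
    exact this
  refine ⟨1 / 4 * (∫ x, η c x ^ 2 / (1 - η c x)) + c / 4 * α, ?_, ?_⟩
  · rw [funext hP]
    exact ((hasDerivAt_id c).div_const 4).mul hA
  · rw [funext hE]
    have h := ((((hasDerivAt_id c).pow 2).div_const 8).mul hA).add (hB.const_mul (1 / 8)) |>.add
      (hC.const_mul (1 / 4))
    refine h.congr_deriv ?_
    simp
    ring
end

section
/- Let λ ≥ 1/√2. Then inf_{ξ ∈ ℝ} (ξ² + 2·e^{−λ²ξ²}) = (1 + ln(2λ²))/λ². Consequently, for the Gaussian potential with Fourier transform Ŵ_λ(ξ) = e^{−λ²ξ²}, the Landau critical speed c_L(λ) = inf_{ξ ≠ 0} √(ξ⁴ + 2 Ŵ_λ(ξ) ξ²)/|ξ| equals √(1 + ln(2λ²))/λ. -/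
/-- For the Gaussian potential `Ŵ_λ(ξ) = e^{-λ²ξ²}` with `λ ≥ 1/√2`:
`inf_ξ (ξ² + 2e^{-λ²ξ²}) = (1 + ln(2λ²))/λ²`, and the Landau critical speed
`inf_{ξ ≠ 0} √(ξ⁴ + 2Ŵ_λ(ξ)ξ²)/|ξ|` equals `√(1 + ln(2λ²))/λ`. -/
theorem landau_speed_gaussian
    (lam : ℝ) (hlam : 1 / Real.sqrt 2 ≤ lam) :
    IsGLB (Set.range fun ξ : ℝ => ξ ^ 2 + 2 * Real.exp (-(lam ^ 2 * ξ ^ 2)))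
      ((1 + Real.log (2 * lam ^ 2)) / lam ^ 2) ∧
    IsGLB
      ((fun ξ : ℝ => Real.sqrt (ξ ^ 4 + 2 * Real.exp (-(lam ^ 2 * ξ ^ 2)) * ξ ^ 2) / |ξ|) ''
        {ξ : ℝ | ξ ≠ 0})
      (Real.sqrt (1 + Real.log (2 * lam ^ 2)) / lam) := by
  have h2 : 0 < Real.sqrt 2 := by positivity
  have hl : 0 < lam := lt_of_lt_of_le (by positivity) hlam
  have hl2 : 1 ≤ 2 * lam ^ 2 := by
    have h := pow_le_pow_left₀ (by positivity) hlam 2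
    rw [div_pow, Real.sq_sqrt (by norm_num)] at h
    linarith
  have hL : 0 ≤ Real.log (2 * lam ^ 2) := Real.log_nonneg hl2
  have hexp : Real.exp (Real.log (2 * lam ^ 2)) = 2 * lam ^ 2 := Real.exp_log (by positivity)
  set L := Real.log (2 * lam ^ 2) with hLdef
  have low : ∀ ξ : ℝ, (1 + L) / lam ^ 2 ≤ ξ ^ 2 + 2 * Real.exp (-(lam ^ 2 * ξ ^ 2)) := by
    intro ξ
    rw [div_le_iff₀ (by positivity)]
    have h := Real.add_one_le_exp (L + -(lam ^ 2 * ξ ^ 2))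
    rw [Real.exp_add, hexp] at h
    nlinarith
  have att : (Real.sqrt L / lam) ^ 2 + 2 * Real.exp (-(lam ^ 2 * (Real.sqrt L / lam) ^ 2))
      = (1 + L) / lam ^ 2 := by
    have h1 : lam ^ 2 * (Real.sqrt L / lam) ^ 2 = L := by
      rw [div_pow, Real.sq_sqrt hL]; field_simp
    rw [h1, Real.exp_neg, hexp, div_pow, Real.sq_sqrt hL]
    field_simp
    ring
  have key : ∀ ξ : ℝ, ξ ≠ 0 →
      Real.sqrt (ξ ^ 4 + 2 * Real.exp (-(lam ^ 2 * ξ ^ 2)) * ξ ^ 2) / |ξ|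
        = Real.sqrt (ξ ^ 2 + 2 * Real.exp (-(lam ^ 2 * ξ ^ 2))) := by
    intro ξ hξ
    have h1 : ξ ^ 4 + 2 * Real.exp (-(lam ^ 2 * ξ ^ 2)) * ξ ^ 2
        = (ξ ^ 2 + 2 * Real.exp (-(lam ^ 2 * ξ ^ 2))) * ξ ^ 2 := by ring
    rw [h1, Real.sqrt_mul (by positivity), Real.sqrt_sq_eq_abs]
    exact mul_div_cancel_right₀ _ (abs_ne_zero.mpr hξ)
  have tgt : Real.sqrt (1 + L) / lam = Real.sqrt ((1 + L) / lam ^ 2) := by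
    rw [Real.sqrt_div (by linarith), Real.sqrt_sq hl.le]
  refine ⟨⟨?_, ?_⟩, ?_, ?_⟩
  · rintro _ ⟨ξ, rfl⟩
    exact low ξ
  · intro b hb
    rw [← att]
    exact hb ⟨_, rfl⟩
  · rintro _ ⟨ξ, hξ, rfl⟩
    simp only
    rw [key ξ hξ, tgt]
    exact Real.sqrt_le_sqrt (low ξ)
  · intro b hb
    rw [tgt, ← att]
    have hc : IsClosed {ξ : ℝ | b ≤ Real.sqrt (ξ ^ 2 + 2 * Real.exp (-(lam ^ 2 * ξ ^ 2)))} :=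
      isClosed_le continuous_const (by fun_prop)
    have hs : ({0}ᶜ : Set ℝ) ⊆
        {ξ : ℝ | b ≤ Real.sqrt (ξ ^ 2 + 2 * Real.exp (-(lam ^ 2 * ξ ^ 2)))} := by
      intro ξ hξ
      have hξ' : ξ ≠ 0 := by simpa using hξ
      show b ≤ _
      rw [← key ξ hξ']
      exact hb ⟨ξ, hξ', rfl⟩
    exact closure_minimal hs hc ((dense_compl_singleton (0 : ℝ)) _)
end
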